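/- There exists a universal constant C ≥ 1 such that the following holds for every ε ∈ (0,1/2). Let P and Q be PBDs on the same number of components, where P has parameters p_1,…,p_k ≤ 1/2 and p'_1,…,p'_m > 1/2, and Q has parameters q_1,…,q_k ≤ 1/2 and q'_1,…,q'_m > 1/2 (the same counts k and m). Suppose Var[P] = Var[Q] = V, and set A = min(3, C·√(log(1/ε)/V)). If for every positive integer ℓ it holds that A^ℓ · ( |Σ_{i=1}^k p_i^ℓ − Σ_{i=1}^k q_i^ℓ| + |Σ_{i=1}^m (1−p'_i)^ℓ − Σ_{i=1}^m (1−q'_i)^ℓ| ) < ε/(C·log(1/ε)), then dTV(P,Q) < ε. -/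

import Mathlib

/-!
The proof compares characteristic functions and inverts the Fourier transform. Write
`L = log (1/ε)`, `δ = ε / (C L)` and `z = e^{ix} - 1`.

* After reflecting the parameters above `1/2`, the characteristic function of a PBD is
  `e^{imx} ∏ (1 + p_i z) ∏ (1 + (1 - p'_i) z̄)`. The Taylor series of the logarithm expresses it
  through power sums, so for `|z| ≤ 2A/3` the moment hypothesis makes the two characteristic
  functions agree up to a factor `1 + O(δ)` (`pbdChar_sub_le_of_moments`).
* Every characteristic function is at most `exp (-V |z|² / 2)` in norm (`norm_pbdChar_le`). For
  `|z| > 2A/3` this is at most `ε^{C²/9} exp (-V |z|² / 4)`, and `ε^{C²/9} ≤ δ` for large `C`.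
  Hence the difference is at most `6 δ exp (-V |z|² / 4)` everywhere (`pbdChar_sub_le`).
* Fourier inversion and the Gaussian integral bound the pmfs' pointwise difference by
  `6 δ min (1, 1/√V)` (`pmf_sub_le`).
* By a Chernoff bound (`pbd_tail`) the first distribution has mass at most `2 ε³` outside a window
  of half-width `4 max (L, √(L V))` about its mean, and by `dTV_le_window` only this tail and the
  difference inside the window matter. The latter sums to `O(ε / C)`.
-/

open scoped Classical

/-- The pmf of the Poisson binomial distribution with parameter vector `p`. -/
noncomputable def pbdPmf {ι : Type*} [Fintype ι] [DecidableEq ι] (p : ι → ℝ) (k : ℕ) : ℝ :=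
  ∑ S ∈ Finset.univ.powerset.filter (fun S : Finset ι => S.card = k),
    (∏ i ∈ S, p i) * ∏ i ∈ Sᶜ, (1 - p i)

/-- Variance of a PBD with parameter vector `p`. -/
noncomputable def pbdVar {ι : Type*} [Fintype ι] (p : ι → ℝ) : ℝ := ∑ i, p i * (1 - p i)

/-- Total variation distance between two distributions on ℕ. -/
noncomputable def dTV (P Q : ℕ → ℝ) : ℝ := (1 / 2) * ∑' k : ℕ, |P k - Q k|


/-! ### The generating function of a Poisson binomial distribution -/

section General

variable {ι : Type*} [Fintype ι] [DecidableEq ι]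

lemma pbdPmf_nonneg {p : ι → ℝ} (hp : ∀ i, 0 ≤ p i ∧ p i ≤ 1) (k : ℕ) : 0 ≤ pbdPmf p k := by
  unfold pbdPmf
  exact Finset.sum_nonneg fun S _ => mul_nonneg (Finset.prod_nonneg fun i _ => (hp i).1)
    (Finset.prod_nonneg fun i _ => by linarith [(hp i).2])

lemma pbdPmf_eq_zero (p : ι → ℝ) {k : ℕ} (hk : k ∉ Finset.range (Fintype.card ι + 1)) :
    pbdPmf p k = 0 := by
  unfold pbdPmf
  refine Finset.sum_eq_zero fun S hS => ?_
  have h1 : S.card = k := (Finset.mem_filter.1 hS).2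
  have h2 := Finset.card_le_univ S
  exact absurd (Finset.mem_range.2 (by omega)) hk

/-- The generating function of a PBD, with coefficients pushed along a ring homomorphism so that
it can be evaluated at real points (moment generating function) and at points of the complex unit
circle (characteristic function). -/
lemma pbd_gen {R : Type*} [CommRing R] (φ : ℝ →+* R) (p : ι → ℝ) (x : R) :
    ∑ k ∈ Finset.range (Fintype.card ι + 1), φ (pbdPmf p k) * x ^ k
      = ∏ i, (1 - φ (p i) + φ (p i) * x) := by
  have h := Finset.prod_add (fun i => φ (p i) * x) (fun i => 1 - φ (p i)) (Finset.univ : Finset ι)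
  have hmaps : ∀ S ∈ (Finset.univ : Finset ι).powerset,
      S.card ∈ Finset.range (Fintype.card ι + 1) := fun S _ =>
    Finset.mem_range.2 (Nat.lt_succ_of_le (Finset.card_le_univ S))
  rw [← Finset.sum_fiberwise_of_maps_to hmaps] at h
  calc _ = ∏ i, (φ (p i) * x + (1 - φ (p i))) := ?_
    _ = _ := Finset.prod_congr rfl fun i _ => by ring
  rw [h]
  refine Finset.sum_congr rfl fun k _ => ?_
  unfold pbdPmf
  rw [map_sum, Finset.sum_mul]
  refine Finset.sum_congr rfl fun S hS => ?_
  have h1 : S.card = k := (Finset.mem_filter.1 hS).2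
  rw [Finset.prod_mul_distrib, Finset.prod_const, h1, map_mul, map_prod, map_prod,
    Finset.compl_eq_univ_sdiff]
  simp only [map_sub, map_one]
  ring

lemma sum_pbdPmf (p : ι → ℝ) : ∑ k ∈ Finset.range (Fintype.card ι + 1), pbdPmf p k = 1 := by
  simpa using pbd_gen (RingHom.id ℝ) p 1

/-- Only the excess of the first distribution over the second has to be summed, so outside a
window `W` the total variation distance is controlled by the tail of the first distribution
alone. -/
lemma dTV_le_window {p q : ι → ℝ} (hp : ∀ i, 0 ≤ p i ∧ p i ≤ 1) (hq : ∀ i, 0 ≤ q i ∧ q i ≤ 1)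
    (W : ℕ → Prop) :
    dTV (pbdPmf p) (pbdPmf q) ≤
      (∑ k ∈ (Finset.range (Fintype.card ι + 1)).filter W, |pbdPmf p k - pbdPmf q k|) +
      ∑ k ∈ (Finset.range (Fintype.card ι + 1)).filter (fun k => ¬ W k), pbdPmf p k := by
  unfold dTV
  rw [tsum_eq_sum (s := Finset.range (Fintype.card ι + 1))
    (fun k hk => by simp [pbdPmf_eq_zero p hk, pbdPmf_eq_zero q hk])]
  have h1 : ∑ k ∈ Finset.range (Fintype.card ι + 1), |pbdPmf p k - pbdPmf q k|
      = 2 * ∑ k ∈ Finset.range (Fintype.card ι + 1), max (pbdPmf p k - pbdPmf q k) 0 := by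
    have h2 : ∀ x : ℝ, |x| = 2 * max x 0 - x := fun x => by
      rcases le_total 0 x with h | h
      · rw [abs_of_nonneg h, max_eq_left h]; ring
      · rw [abs_of_nonpos h, max_eq_right h]; ring
    simp_rw [h2]
    rw [Finset.sum_sub_distrib, Finset.sum_sub_distrib, sum_pbdPmf, sum_pbdPmf, ← Finset.mul_sum]
    ring
  rw [h1, ← Finset.sum_filter_add_sum_filter_not _ W]
  have h3 : ∑ k ∈ (Finset.range (Fintype.card ι + 1)).filter W, max (pbdPmf p k - pbdPmf q k) 0
      ≤ ∑ k ∈ (Finset.range (Fintype.card ι + 1)).filter W, |pbdPmf p k - pbdPmf q k| :=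
    Finset.sum_le_sum fun k _ => max_le (le_abs_self _) (abs_nonneg _)
  have h4 : ∑ k ∈ (Finset.range (Fintype.card ι + 1)).filter (fun k => ¬ W k),
      max (pbdPmf p k - pbdPmf q k) 0
      ≤ ∑ k ∈ (Finset.range (Fintype.card ι + 1)).filter (fun k => ¬ W k), pbdPmf p k :=
    Finset.sum_le_sum fun k _ => max_le (by linarith [pbdPmf_nonneg hq k]) (pbdPmf_nonneg hp k)
  linarith

/-! ### Chernoff bound -/

lemma bernoulli_mgf_le {a t : ℝ} (ha : 0 ≤ a) (ha1 : a ≤ 1) (ht : |t| ≤ 1) :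
    (1 - a + a * Real.exp t) * Real.exp (-(t * a)) ≤ Real.exp (t ^ 2 * (a * (1 - a))) := by
  obtain ⟨ht1, ht2⟩ := abs_le.1 ht
  have e1 := (abs_le.1 (Real.abs_exp_sub_one_sub_id_le (x := t * (1 - a))
    (abs_le.2 ⟨by nlinarith, by nlinarith⟩))).2
  have e2 := (abs_le.1 (Real.abs_exp_sub_one_sub_id_le (x := -(t * a))
    (abs_le.2 ⟨by nlinarith, by nlinarith⟩))).2
  have e3 : (1 - a + a * Real.exp t) * Real.exp (-(t * a))
      = (1 - a) * Real.exp (-(t * a)) + a * Real.exp (t * (1 - a)) := by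
    rw [show t * (1 - a) = t + -(t * a) by ring, Real.exp_add]; ring
  have e4 := Real.add_one_le_exp (t ^ 2 * (a * (1 - a)))
  have e5 := mul_le_mul_of_nonneg_left e1 ha
  have e6 := mul_le_mul_of_nonneg_left e2 (sub_nonneg.2 ha1)
  rw [e3]
  nlinarith

lemma pbd_mgf_le {p : ι → ℝ} (hp : ∀ i, 0 ≤ p i ∧ p i ≤ 1) {t : ℝ} (ht : |t| ≤ 1) :
    ∑ k ∈ Finset.range (Fintype.card ι + 1), pbdPmf p k * Real.exp (t * (k - ∑ i, p i))
      ≤ Real.exp (t ^ 2 * pbdVar p) := by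
  have h := pbd_gen (RingHom.id ℝ) p (Real.exp t)
  simp only [RingHom.id_apply] at h
  calc ∑ k ∈ Finset.range (Fintype.card ι + 1), pbdPmf p k * Real.exp (t * (k - ∑ i, p i))
      = (∑ k ∈ Finset.range (Fintype.card ι + 1), pbdPmf p k * Real.exp t ^ k) *
          Real.exp (∑ i, -(t * p i)) := by
        rw [Finset.sum_mul]
        refine Finset.sum_congr rfl fun k _ => ?_
        rw [← Real.exp_nat_mul, mul_assoc, ← Real.exp_add, Finset.sum_neg_distrib,
          ← Finset.mul_sum]
        ring_nf
    _ = ∏ i, (1 - p i + p i * Real.exp t) * Real.exp (-(t * p i)) := by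
        rw [h, Real.exp_sum, Finset.prod_mul_distrib]
    _ ≤ ∏ i, Real.exp (t ^ 2 * (p i * (1 - p i))) := by
        refine Finset.prod_le_prod (fun i _ => ?_) (fun i _ => ?_)
        · have := hp i
          have := Real.exp_pos t
          exact mul_nonneg (by nlinarith) (Real.exp_pos _).le
        · exact bernoulli_mgf_le (hp i).1 (hp i).2 ht
    _ = _ := by rw [← Real.exp_sum, pbdVar, Finset.mul_sum]

lemma pbd_tail {p : ι → ℝ} (hp : ∀ i, 0 ≤ p i ∧ p i ≤ 1) {s : ℝ} (hs : 0 ≤ s) (hs1 : s ≤ 1)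
    (t : ℝ) :
    ∑ k ∈ (Finset.range (Fintype.card ι + 1)).filter
        (fun k : ℕ => ¬ |(k : ℝ) - ∑ i, p i| ≤ t), pbdPmf p k
      ≤ 2 * Real.exp (s ^ 2 * pbdVar p - s * t) := by
  have h1 := pbd_mgf_le hp (t := s) (by rwa [abs_of_nonneg hs])
  have h2 := pbd_mgf_le hp (t := -s) (by rwa [abs_neg, abs_of_nonneg hs])
  rw [neg_sq] at h2
  have h3 : ∀ k : ℕ, ¬ |(k : ℝ) - ∑ i, p i| ≤ t → pbdPmf p k ≤ Real.exp (-(s * t)) *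
      (pbdPmf p k * Real.exp (s * (k - ∑ i, p i)) +
        pbdPmf p k * Real.exp (-s * (k - ∑ i, p i))) := by
    intro k hk
    rw [← mul_add, mul_left_comm]
    refine le_mul_of_one_le_right (pbdPmf_nonneg hp k) ?_
    rw [mul_add, ← Real.exp_add, ← Real.exp_add]
    have p1 := Real.exp_pos (-(s * t) + s * (k - ∑ i, p i))
    have p2 := Real.exp_pos (-(s * t) + -s * (k - ∑ i, p i))
    rcases lt_abs.1 (not_le.1 hk) with h | h
    · have := Real.one_le_exp (x := -(s * t) + s * (k - ∑ i, p i)) (by nlinarith)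
      linarith
    · have := Real.one_le_exp (x := -(s * t) + -s * (k - ∑ i, p i)) (by nlinarith)
      linarith
  calc _ ≤ ∑ k ∈ (Finset.range (Fintype.card ι + 1)).filter
        (fun k : ℕ => ¬ |(k : ℝ) - ∑ i, p i| ≤ t), Real.exp (-(s * t)) *
      (pbdPmf p k * Real.exp (s * (k - ∑ i, p i)) +
        pbdPmf p k * Real.exp (-s * (k - ∑ i, p i))) :=
        Finset.sum_le_sum fun k hk => h3 k (Finset.mem_filter.1 hk).2
    _ ≤ ∑ k ∈ Finset.range (Fintype.card ι + 1), Real.exp (-(s * t)) *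
      (pbdPmf p k * Real.exp (s * (k - ∑ i, p i)) +
        pbdPmf p k * Real.exp (-s * (k - ∑ i, p i))) := by
        refine Finset.sum_le_sum_of_subset_of_nonneg (Finset.filter_subset _ _) fun k _ _ => ?_
        have := pbdPmf_nonneg hp k
        positivity
    _ ≤ _ := by
        rw [← Finset.mul_sum, Finset.sum_add_distrib, sub_eq_neg_add, Real.exp_add]
        have := Real.exp_pos (-(s * t))
        nlinarith

lemma card_window_le (N : ℕ) (c : ℝ) {t : ℝ} (ht : 0 ≤ t) :
    (((Finset.range N).filter (fun k : ℕ => |(k : ℝ) - c| ≤ t)).card : ℝ) ≤ 2 * t + 1 := by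
  have h1 : ((Finset.range N).filter (fun k : ℕ => |(k : ℝ) - c| ≤ t)).card
      ≤ (Finset.Icc ⌈c - t⌉ ⌊c + t⌋).card := by
    refine Finset.card_le_card_of_injOn (fun k : ℕ => (k : ℤ)) ?_ (by simp)
    intro k hk
    have h := abs_le.1 (Finset.mem_filter.1 hk).2
    simp only [Finset.coe_Icc, Set.mem_Icc, Int.ceil_le, Int.le_floor, Int.cast_natCast]
    constructor <;> linarith
  rw [Int.card_Icc] at h1
  have h2 : (((⌊c + t⌋ + 1 - ⌈c - t⌉).toNat : ℕ) : ℝ) ≤ 2 * t + 1 := by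
    have h3 : (((⌊c + t⌋ + 1 - ⌈c - t⌉).toNat : ℤ) : ℝ) ≤ 2 * t + 1 := by
      rw [Int.toNat_eq_max, Int.cast_max]
      refine max_le ?_ (by push_cast; linarith)
      push_cast
      linarith [Int.floor_le (c + t), Int.le_ceil (c - t)]
    exact_mod_cast h3
  exact le_trans (by exact_mod_cast h1) h2

/-! ### Fourier inversion -/

lemma norm_bernoulli_char_le (a x : ℝ) :
    ‖(1 - a + a * Complex.exp (x * Complex.I) : ℂ)‖
      ≤ Real.exp (-(a * (1 - a) * (1 - Real.cos x))) := by
  refine le_of_sq_le_sq ?_ (Real.exp_pos _).le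
  have h1 : ‖(1 - a + a * Complex.exp (x * Complex.I) : ℂ)‖ ^ 2
      = 1 + -(2 * (a * (1 - a) * (1 - Real.cos x))) := by
    rw [← Complex.normSq_eq_norm_sq, Complex.exp_mul_I, ← Complex.ofReal_cos,
      ← Complex.ofReal_sin, Complex.normSq_apply]
    simp [Complex.cos_ofReal_re, Complex.sin_ofReal_re]
    linear_combination a ^ 2 * Real.sin_sq_add_cos_sq x
  have h2 := Real.add_one_le_exp (-(2 * (a * (1 - a) * (1 - Real.cos x))))
  rw [h1, ← Real.exp_nat_mul]
  push_cast
  rw [show (2 : ℝ) * -(a * (1 - a) * (1 - Real.cos x))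
    = -(2 * (a * (1 - a) * (1 - Real.cos x))) by ring]
  linarith

/-- The characteristic function of a PBD, written as a product. -/
noncomputable def pbdChar {κ : Type*} [Fintype κ] (p : κ → ℝ) (x : ℝ) : ℂ :=
  ∏ i, (1 - p i + p i * Complex.exp (x * Complex.I) : ℂ)

lemma norm_pbdChar_le {κ : Type*} [Fintype κ] (p : κ → ℝ) (x : ℝ) :
    ‖pbdChar p x‖ ≤ Real.exp (-(pbdVar p * (1 - Real.cos x))) := by
  unfold pbdChar pbdVar
  rw [norm_prod, Finset.sum_mul, ← Finset.sum_neg_distrib, Real.exp_sum]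
  exact Finset.prod_le_prod (fun i _ => norm_nonneg _)
    fun i _ => norm_bernoulli_char_le (p i) x

lemma integral_exp_int (n : ℤ) : ∫ x in (-Real.pi)..Real.pi, Complex.exp ((n * Complex.I) * x)
    = if n = 0 then (2 * Real.pi : ℂ) else 0 := by
  split_ifs with h
  · simp [h]; ring
  · rw [integral_exp_mul_complex (by simp [h])]
    rw [div_eq_zero_iff]
    left
    rw [sub_eq_zero, Complex.exp_eq_exp_iff_exists_int]
    exact ⟨n, by push_cast; ring⟩

lemma fourier_inversion (N : ℕ) (a : ℕ → ℝ) {j : ℕ} (hj : j ∈ Finset.range N) :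
    ∫ x in (-Real.pi)..Real.pi, (∑ k ∈ Finset.range N, (a k : ℂ) * Complex.exp (x * Complex.I) ^ k)
      * Complex.exp (-(j * Complex.I) * x) = 2 * Real.pi * a j := by
  have h1 : ∀ x : ℝ, (∑ k ∈ Finset.range N, (a k : ℂ) * Complex.exp (x * Complex.I) ^ k)
      * Complex.exp (-(j * Complex.I) * x)
      = ∑ k ∈ Finset.range N, (a k : ℂ) * Complex.exp ((((k : ℤ) - (j : ℤ) : ℤ) * Complex.I) * x) := by
    intro x
    rw [Finset.sum_mul]
    refine Finset.sum_congr rfl fun k _ => ?_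
    rw [← Complex.exp_nat_mul, mul_assoc, ← Complex.exp_add]
    push_cast
    ring_nf
  simp_rw [h1]
  rw [intervalIntegral.integral_finsetSum]
  · simp_rw [intervalIntegral.integral_const_mul, integral_exp_int, sub_eq_zero, Nat.cast_inj]
    simp only [mul_ite, mul_zero, Finset.sum_ite_eq', hj, if_true]
    ring
  · intro k _
    exact Continuous.intervalIntegrable (by fun_prop) _ _

/-- If the characteristic functions differ by at most `B` times a Gaussian, then the pmfs differ
pointwise by at most `B * min 1 (1 / √V)`. The two endpoints of the period are left out because
the logarithmic expansion below may diverge there. -/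
lemma pmf_sub_le {p q : ι → ℝ} {V B : ℝ} (hV : 0 < V) (hB : 0 ≤ B)
    (h : ∀ x : ℝ, |x| < Real.pi →
      ‖pbdChar p x - pbdChar q x‖ ≤ B * Real.exp (-(V * (1 - Real.cos x) / 2))) (j : ℕ) :
    |pbdPmf p j - pbdPmf q j| ≤ B * min 1 (1 / Real.sqrt V) := by
  have hpi := Real.pi_pos
  by_cases hj : j ∈ Finset.range (Fintype.card ι + 1)
  swap
  · rw [pbdPmf_eq_zero p hj, pbdPmf_eq_zero q hj]; simp; positivity
  have hinv := fourier_inversion _ (fun k => pbdPmf p k - pbdPmf q k) hj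
  have hg : ∀ x : ℝ, ∑ k ∈ Finset.range (Fintype.card ι + 1),
      ((pbdPmf p k - pbdPmf q k : ℝ) : ℂ) * Complex.exp (x * Complex.I) ^ k
      = pbdChar p x - pbdChar q x := by
    intro x
    have e1 := pbd_gen Complex.ofRealHom p (Complex.exp (x * Complex.I))
    have e2 := pbd_gen Complex.ofRealHom q (Complex.exp (x * Complex.I))
    simp only [Complex.ofRealHom_eq_coe] at e1 e2
    unfold pbdChar
    rw [← e1, ← e2, ← Finset.sum_sub_distrib]
    exact Finset.sum_congr rfl fun k _ => by push_cast; ring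
  simp_rw [hg] at hinv
  have hn : ‖(2 * Real.pi * ((pbdPmf p j - pbdPmf q j : ℝ) : ℂ))‖
      = 2 * Real.pi * |pbdPmf p j - pbdPmf q j| := by
    rw [norm_mul, norm_mul, Complex.norm_real, Complex.norm_real, Real.norm_eq_abs,
      Real.norm_eq_abs, abs_of_pos hpi]
    simp
  have hb : 0 < V / Real.pi ^ 2 := by positivity
  have hbd : ∀ᵐ x : ℝ, x ∈ Set.Ioc (-Real.pi) Real.pi →
      ‖(pbdChar p x - pbdChar q x) * Complex.exp (-(j * Complex.I) * x)‖
        ≤ B * Real.exp (-(V / Real.pi ^ 2) * x ^ 2) := by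
    have hne : ∀ᵐ x : ℝ, x ≠ Real.pi := by simp [MeasureTheory.ae_iff]
    filter_upwards [hne] with x hx hmem
    have hx1 : |x| < Real.pi := abs_lt.2 ⟨hmem.1, lt_of_le_of_ne hmem.2 hx⟩
    have e : ‖Complex.exp (-(j * Complex.I) * x)‖ = 1 := by
      rw [show (-(j * Complex.I) * x : ℂ) = ((-(j * x) : ℝ) : ℂ) * Complex.I by push_cast; ring]
      exact Complex.norm_exp_ofReal_mul_I _
    rw [norm_mul, e, mul_one]
    refine (h x hx1).trans (mul_le_mul_of_nonneg_left (Real.exp_le_exp.2 ?_) hB)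
    have hc := Real.cos_le_one_sub_mul_cos_sq hx1.le
    have : V * (2 / Real.pi ^ 2 * x ^ 2) ≤ V * (1 - Real.cos x) :=
      mul_le_mul_of_nonneg_left (by linarith) hV.le
    have e2 : V / Real.pi ^ 2 * x ^ 2 = V * (2 / Real.pi ^ 2 * x ^ 2) / 2 := by ring
    linarith
  have hI := intervalIntegral.norm_integral_le_of_norm_le (by linarith) hbd
    (Continuous.intervalIntegrable (by fun_prop) _ _)
  rw [hinv, hn, intervalIntegral.integral_const_mul] at hI
  have hI1 : ∫ x in (-Real.pi)..Real.pi, Real.exp (-(V / Real.pi ^ 2) * x ^ 2) ≤ 2 * Real.pi := by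
    have := intervalIntegral.norm_integral_le_of_norm_le_const (a := -Real.pi) (b := Real.pi) (C := 1)
      (f := fun x => Real.exp (-(V / Real.pi ^ 2) * x ^ 2)) (fun x _ => by
        rw [Real.norm_eq_abs, abs_of_pos (Real.exp_pos _), Real.exp_le_one_iff]
        nlinarith [sq_nonneg x])
    rw [abs_of_pos (by linarith)] at this
    linarith [Real.le_norm_self (∫ x in (-Real.pi)..Real.pi, Real.exp (-(V / Real.pi ^ 2) * x ^ 2))]
  have hI2 : ∫ x in (-Real.pi)..Real.pi, Real.exp (-(V / Real.pi ^ 2) * x ^ 2)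
      ≤ 2 * Real.pi * (1 / Real.sqrt V) := by
    rw [intervalIntegral.integral_of_le (by linarith)]
    refine (MeasureTheory.setIntegral_le_integral (integrable_exp_neg_mul_sq hb)
      (Filter.Eventually.of_forall fun x => (Real.exp_pos _).le)).trans ?_
    rw [integral_gaussian]
    refine Real.sqrt_le_iff.2 ⟨by positivity, ?_⟩
    rw [mul_pow, div_pow, Real.sq_sqrt hV.le, div_div_eq_mul_div, ← sub_nonneg]
    have : (2 * Real.pi) ^ 2 * (1 ^ 2 / V) - Real.pi * Real.pi ^ 2 / V
      = Real.pi ^ 2 * (4 - Real.pi) / V := by ring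
    rw [this]
    have := Real.pi_le_four
    exact div_nonneg (mul_nonneg (sq_nonneg _) (by linarith)) hV.le
  have hI3 : ∫ x in (-Real.pi)..Real.pi, Real.exp (-(V / Real.pi ^ 2) * x ^ 2)
      ≤ 2 * Real.pi * min 1 (1 / Real.sqrt V) := by
    rw [mul_min_of_nonneg _ _ (by positivity)]
    exact le_min (by linarith) hI2
  have := mul_le_mul_of_nonneg_left hI3 hB
  refine le_of_mul_le_mul_left (a := 2 * Real.pi) ?_ (by positivity)
  linarith

end General

/-! ### Comparing characteristic functions through power sums -/

lemma norm_exp_sub_one_sq (x : ℝ) :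
    ‖Complex.exp (x * Complex.I) - 1‖ ^ 2 = 2 * (1 - Real.cos x) := by
  rw [← Complex.normSq_eq_norm_sq, Complex.exp_mul_I, ← Complex.ofReal_cos,
    ← Complex.ofReal_sin, Complex.normSq_apply]
  simp [Complex.cos_ofReal_re, Complex.sin_ofReal_re]
  linear_combination Real.sin_sq_add_cos_sq x

/-- The components with parameter above `1/2` are reflected: `1 - a + a e^{ix}` equals
`e^{ix} (1 + (1 - a)(e^{-ix} - 1))`. -/
lemma pbdChar_append {k m : ℕ} (p : Fin k → ℝ) (p' : Fin m → ℝ) (x : ℝ) :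
    pbdChar (Fin.append p p') x = Complex.exp (x * Complex.I) ^ m *
      ((∏ i, (1 + (p i : ℂ) * (Complex.exp (x * Complex.I) - 1))) *
        ∏ i, (1 + ((1 - p' i : ℝ) : ℂ) * (Complex.exp ((-x : ℝ) * Complex.I) - 1))) := by
  have hm : Complex.exp (x * Complex.I) ^ m = ∏ _i : Fin m, Complex.exp (x * Complex.I) := by simp
  have he : Complex.exp (x * Complex.I) * Complex.exp ((-x : ℝ) * Complex.I) = 1 := by
    rw [← Complex.exp_add]; simp
  unfold pbdChar
  rw [Fin.prod_univ_add, mul_left_comm, hm, ← Finset.prod_mul_distrib]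
  simp only [Fin.append_left, Fin.append_right]
  congr 1
  · exact Finset.prod_congr rfl fun i _ => by ring
  · refine Finset.prod_congr rfl fun i _ => ?_
    push_cast at he ⊢
    linear_combination (-(1 - (p' i : ℂ))) * he

lemma prod_one_add_eq_exp {n : ℕ} {a : Fin n → ℝ} (ha : ∀ i, 0 ≤ a i ∧ a i ≤ 1 / 2) {z : ℂ}
    (hz : ‖z‖ < 2) :
    ∏ i, (1 + (a i : ℂ) * z) = Complex.exp (∑ i, Complex.log (1 + (a i : ℂ) * z)) ∧
    HasSum (fun l : ℕ => (-1) ^ (l + 1) * z ^ l / l * ((∑ i, a i ^ l : ℝ) : ℂ))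
      (∑ i, Complex.log (1 + (a i : ℂ) * z)) := by
  have hn : ∀ i, ‖(a i : ℂ) * z‖ < 1 := fun i => by
    rw [norm_mul, Complex.norm_real, Real.norm_eq_abs, abs_of_nonneg (ha i).1]
    nlinarith [ha i, norm_nonneg z]
  constructor
  · rw [Complex.exp_sum]
    refine Finset.prod_congr rfl fun i _ => (Complex.exp_log fun h0 => ?_).symm
    have h1 := hn i
    rw [show (a i : ℂ) * z = -1 by linear_combination h0] at h1
    simp at h1
  · have h := hasSum_sum (s := Finset.univ) fun i _ => Complex.hasSum_taylorSeries_log (hn i)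
    refine h.congr_fun ?_
    intro l
    push_cast
    rw [Finset.mul_sum]
    exact Finset.sum_congr rfl fun i _ => by rw [mul_pow]; ring

lemma pbdChar_sub_le_of_moments {k m : ℕ} {p q : Fin k → ℝ} {p' q' : Fin m → ℝ}
    (hp : ∀ i, 0 ≤ p i ∧ p i ≤ 1 / 2) (hq : ∀ i, 0 ≤ q i ∧ q i ≤ 1 / 2)
    (hp' : ∀ i, 1 / 2 < p' i ∧ p' i ≤ 1) (hq' : ∀ i, 1 / 2 < q' i ∧ q' i ≤ 1)
    {A δ : ℝ} (hA : 0 < A) (hδ : δ ≤ 1 / 2)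
    (hmom : ∀ l : ℕ, 0 < l → A ^ l * (|(∑ i, p i ^ l) - ∑ i, q i ^ l| +
      |(∑ i, (1 - p' i) ^ l) - ∑ i, (1 - q' i) ^ l|) < δ)
    {x : ℝ} (hx : |x| < Real.pi) (hxA : ‖Complex.exp (x * Complex.I) - 1‖ ≤ 2 * A / 3) :
    ‖pbdChar (Fin.append p p') x - pbdChar (Fin.append q q') x‖
      ≤ 4 * δ * ‖pbdChar (Fin.append q q') x‖ := by
  set z := Complex.exp (x * Complex.I) - 1 with hz
  set w := Complex.exp ((-x : ℝ) * Complex.I) - 1 with hw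
  have hzw : ‖w‖ = ‖z‖ := by
    rw [← sq_eq_sq₀ (norm_nonneg _) (norm_nonneg _), hz, hw, norm_exp_sub_one_sq,
      norm_exp_sub_one_sq, Real.cos_neg]
  have hz2 : ‖z‖ < 2 := by
    refine lt_of_pow_lt_pow_left₀ 2 (by norm_num) ?_
    rw [hz, norm_exp_sub_one_sq]
    have : Real.cos Real.pi < Real.cos |x| :=
      Real.cos_lt_cos_of_nonneg_of_le_pi (abs_nonneg x) le_rfl hx
    rw [Real.cos_pi, Real.cos_abs] at this
    linarith
  obtain ⟨ep, sp⟩ := prod_one_add_eq_exp hp hz2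
  obtain ⟨eq, sq⟩ := prod_one_add_eq_exp hq hz2
  obtain ⟨ep', sp'⟩ := prod_one_add_eq_exp (a := fun i => 1 - p' i)
    (fun i => ⟨by linarith [hp' i], by linarith [hp' i]⟩) (hzw.trans_lt hz2)
  obtain ⟨eq', sq'⟩ := prod_one_add_eq_exp (a := fun i => 1 - q' i)
    (fun i => ⟨by linarith [hq' i], by linarith [hq' i]⟩) (hzw.trans_lt hz2)
  rw [pbdChar_append, pbdChar_append, ← hz, ← hw, ep, eq, ep', eq']
  have hD := (sp.sub sq).add (sp'.sub sq')
  set a := ∑ i, Complex.log (1 + (p i : ℂ) * z)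
  set b := ∑ i, Complex.log (1 + (q i : ℂ) * z)
  set a' := ∑ i, Complex.log (1 + ((1 - p' i : ℝ) : ℂ) * w)
  set b' := ∑ i, Complex.log (1 + ((1 - q' i : ℝ) : ℂ) * w)
  have hδ0 : 0 < δ := lt_of_le_of_lt (by positivity) (hmom 1 one_pos)
  have hgeo : HasSum (fun l : ℕ => δ * (2 / 3 : ℝ) ^ l) (δ * (1 - 2 / 3)⁻¹) :=
    (hasSum_geometric_of_lt_one (by norm_num) (by norm_num)).mul_left δ
  -- The `l = 0` term of the logarithmic series vanishes, so the geometric sum starts at `l = 1`.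
  have hgeo1 : HasSum (fun l : ℕ => if l = 0 then 0 else δ * (2 / 3 : ℝ) ^ l) (2 * δ) := by
    have h0 : HasSum (fun l : ℕ => if l = 0 then δ else 0) δ := hasSum_ite_eq 0 δ
    have h1 := hgeo.sub h0
    rw [show δ * (1 - 2 / 3)⁻¹ - δ = 2 * δ by ring] at h1
    refine h1.congr_fun fun l => ?_
    by_cases h : l = 0 <;> simp [h]
  have hDn : ‖a - b + (a' - b')‖ ≤ 2 * δ := by
    rw [← hD.tsum_eq]
    refine tsum_of_norm_bounded hgeo1 fun l => ?_
    rcases Nat.eq_zero_or_pos l with rfl | hl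
    · simp
    rw [if_neg hl.ne']
    have hl1 : (1 : ℝ) ≤ l := by exact_mod_cast hl
    have hm := hmom l hl
    rw [← mul_sub, ← mul_sub, ← Complex.ofReal_sub, ← Complex.ofReal_sub]
    refine (norm_add_le _ _).trans ?_
    simp only [norm_mul, norm_div, norm_pow, norm_neg, norm_one, one_pow, one_mul, hzw,
      Complex.norm_natCast, Complex.norm_real, Real.norm_eq_abs]
    rw [← mul_add]
    have h1 : ‖z‖ ^ l / l ≤ (2 * A / 3) ^ l :=
      (div_le_self (by positivity) hl1).trans (pow_le_pow_left₀ (norm_nonneg _) hxA l)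
    refine (mul_le_mul_of_nonneg_right h1 (by positivity)).trans ?_
    rw [show 2 * A / 3 = 2 / 3 * A by ring, mul_pow, mul_assoc, mul_comm δ]
    exact mul_le_mul_of_nonneg_left hm.le (by positivity)
  have hfac : Complex.exp (x * Complex.I) ^ m * (Complex.exp a * Complex.exp a')
      - Complex.exp (x * Complex.I) ^ m * (Complex.exp b * Complex.exp b')
      = (Complex.exp (a - b + (a' - b')) - 1) *
        (Complex.exp (x * Complex.I) ^ m * (Complex.exp b * Complex.exp b')) := by
    have : Complex.exp a * Complex.exp a'
        = Complex.exp (a - b + (a' - b')) * (Complex.exp b * Complex.exp b') := by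
      rw [← Complex.exp_add, ← Complex.exp_add, ← Complex.exp_add]; ring_nf
    rw [this]; ring
  rw [hfac, norm_mul]
  refine mul_le_mul_of_nonneg_right ?_ (norm_nonneg _)
  refine (Complex.norm_exp_sub_one_le (hDn.trans (by linarith))).trans ?_
  linarith

/-- Where `|e^{ix} - 1| ≤ 2A/3` the power sums control the difference; elsewhere (which forces
`A < 3`, i.e. `A = C √(L / V)`) both characteristic functions are below a power of `ε`. -/
lemma pbdChar_sub_le {k m : ℕ} {p q : Fin k → ℝ} {p' q' : Fin m → ℝ}
    (hp : ∀ i, 0 ≤ p i ∧ p i ≤ 1 / 2) (hq : ∀ i, 0 ≤ q i ∧ q i ≤ 1 / 2)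
    (hp' : ∀ i, 1 / 2 < p' i ∧ p' i ≤ 1) (hq' : ∀ i, 1 / 2 < q' i ∧ q' i ≤ 1)
    {V A δ L C : ℝ} (hV : 0 < V) (hL : 0 < L) (hC : 12 ≤ C)
    (hVp : pbdVar (Fin.append p p') = V) (hVq : pbdVar (Fin.append q q') = V)
    (hA : A = min 3 (C * Real.sqrt (L / V)))
    (hδ : δ ≤ 1 / 2) (hδL : δ = Real.exp (-L) / (C * L))
    (hmom : ∀ l : ℕ, 0 < l → A ^ l * (|(∑ i, p i ^ l) - ∑ i, q i ^ l| +
      |(∑ i, (1 - p' i) ^ l) - ∑ i, (1 - q' i) ^ l|) < δ)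
    {x : ℝ} (hx : |x| < Real.pi) :
    ‖pbdChar (Fin.append p p') x - pbdChar (Fin.append q q') x‖
      ≤ 6 * δ * Real.exp (-(V * (1 - Real.cos x) / 2)) := by
  have hC0 : 0 < C := by linarith
  have hA0 : 0 < A := by rw [hA]; exact lt_min (by norm_num) (by positivity)
  have hδ0 : 0 < δ := by rw [hδL]; positivity
  have hcos : 0 ≤ V * (1 - Real.cos x) := mul_nonneg hV.le (by linarith [Real.cos_le_one x])
  have hF := norm_pbdChar_le (Fin.append p p') x
  have hG := norm_pbdChar_le (Fin.append q q') x
  rw [hVp] at hF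
  rw [hVq] at hG
  rcases le_or_gt ‖Complex.exp (x * Complex.I) - 1‖ (2 * A / 3) with h | h
  · refine (pbdChar_sub_le_of_moments hp hq hp' hq' hA0 hδ hmom hx h).trans ?_
    refine mul_le_mul (by linarith) (hG.trans (Real.exp_le_exp.2 (by linarith)))
      (norm_nonneg _) (by positivity)
  · have hz := norm_exp_sub_one_sq x
    have hA3 : A < 3 := by
      nlinarith [Real.neg_one_le_cos x, norm_nonneg (Complex.exp (x * Complex.I) - 1)]
    have hAC : A = C * Real.sqrt (L / V) := by
      rcases min_choice 3 (C * Real.sqrt (L / V)) with h' | h' <;> rw [h'] at hA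
      · linarith
      · exact hA
    have hAsq : A ^ 2 * V = C ^ 2 * L := by
      rw [hAC, mul_pow, Real.sq_sqrt (by positivity)]; field_simp
    have h2 : (2 * A / 3) ^ 2 ≤ 2 * (1 - Real.cos x) := by
      rw [← hz]; exact pow_le_pow_left₀ (by positivity) h.le 2
    have h3 : (C + 1) * L ≤ V * (1 - Real.cos x) / 2 := by
      have e1 : (2 * A / 3) ^ 2 * V ≤ 2 * (1 - Real.cos x) * V :=
        mul_le_mul_of_nonneg_right h2 hV.le
      have e2 : (2 * A / 3) ^ 2 * V = 4 / 9 * (C ^ 2 * L) := by rw [← hAsq]; ring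
      have e3 : (C + 1) * L ≤ C ^ 2 / 9 * L :=
        mul_le_mul_of_nonneg_right (by nlinarith) hL.le
      linarith
    have h4 : Real.exp (-((C + 1) * L)) ≤ δ := by
      rw [hδL, show -((C + 1) * L) = -L + -(C * L) by ring, Real.exp_add, div_eq_mul_inv,
        Real.exp_neg (C * L)]
      refine mul_le_mul_of_nonneg_left (inv_anti₀ (by positivity) ?_) (Real.exp_pos _).le
      linarith [Real.add_one_le_exp (C * L)]
    have h5 : Real.exp (-(V * (1 - Real.cos x)))
        ≤ δ * Real.exp (-(V * (1 - Real.cos x) / 2)) := by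
      rw [show -(V * (1 - Real.cos x))
        = -(V * (1 - Real.cos x) / 2) + -(V * (1 - Real.cos x) / 2) by ring, Real.exp_add]
      refine mul_le_mul_of_nonneg_right (le_trans (Real.exp_le_exp.2 ?_) h4) (Real.exp_pos _).le
      linarith
    have h6 : 0 < δ * Real.exp (-(V * (1 - Real.cos x) / 2)) := by positivity
    linarith [norm_sub_le (pbdChar (Fin.append p p') x) (pbdChar (Fin.append q q') x)]

/-! ### Conclusion -/

lemma append_mem_unit {k m : ℕ} {p : Fin k → ℝ} {p' : Fin m → ℝ}
    (hp : ∀ i, 0 ≤ p i ∧ p i ≤ 1 / 2) (hp' : ∀ i, 1 / 2 < p' i ∧ p' i ≤ 1) (i : Fin (k + m)) :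
    0 ≤ Fin.append p p' i ∧ Fin.append p p' i ≤ 1 := by
  induction i using Fin.addCases with
  | left i => rw [Fin.append_left]; exact ⟨(hp i).1, by linarith [(hp i).2]⟩
  | right i => rw [Fin.append_right]; exact ⟨by linarith [(hp' i).1], (hp' i).2⟩

/-- Zero variance forces all parameters to be `0` or `1`, and the side of `1/2` decides which. -/
lemma append_eq_of_var_zero {k m : ℕ} {p : Fin k → ℝ} {p' : Fin m → ℝ}
    (hp : ∀ i, 0 ≤ p i ∧ p i ≤ 1 / 2) (hp' : ∀ i, 1 / 2 < p' i ∧ p' i ≤ 1)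
    (h : pbdVar (Fin.append p p') = 0) :
    Fin.append p p' = Fin.append (fun _ => 0) (fun _ => 1) := by
  unfold pbdVar at h
  have hu := append_mem_unit hp hp'
  rw [Finset.sum_eq_zero_iff_of_nonneg
    fun i _ => mul_nonneg (hu i).1 (by linarith [(hu i).2])] at h
  funext i
  have hi := h i (Finset.mem_univ i)
  induction i using Fin.addCases with
  | left i =>
    rw [Fin.append_left] at hi ⊢
    rw [Fin.append_left]
    rcases mul_eq_zero.1 hi with h | h
    · exact h
    · linarith [(hp i).2]
  | right i =>
    rw [Fin.append_right] at hi ⊢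
    rw [Fin.append_right]
    rcases mul_eq_zero.1 hi with h | h
    · linarith [(hp' i).1]
    · linarith

/-- Moment-matching lemma: if the power sums of the small parameters (and of one minus the
large parameters) of two PBDs with equal variance are close, then the PBDs are close in
total variation distance. -/
theorem moment_matching_lemma :
    ∃ C : ℝ, 1 ≤ C ∧
      ∀ ε : ℝ, 0 < ε → ε < 1 / 2 →
        ∀ k m : ℕ, ∀ p q : Fin k → ℝ, ∀ p' q' : Fin m → ℝ,
          (∀ i, 0 ≤ p i ∧ p i ≤ 1 / 2) → (∀ i, 0 ≤ q i ∧ q i ≤ 1 / 2) →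
          (∀ i, 1 / 2 < p' i ∧ p' i ≤ 1) → (∀ i, 1 / 2 < q' i ∧ q' i ≤ 1) →
          ∀ V : ℝ,
            pbdVar (Fin.append p p') = V →
            pbdVar (Fin.append q q') = V →
            ∀ A : ℝ, A = min 3 (C * Real.sqrt (Real.log (1 / ε) / V)) →
              (∀ l : ℕ, 0 < l →
                A ^ l * (|(∑ i, p i ^ l) - ∑ i, q i ^ l| +
                    |(∑ i, (1 - p' i) ^ l) - ∑ i, (1 - q' i) ^ l|) <
                  ε / (C * Real.log (1 / ε))) →
              dTV (pbdPmf (Fin.append p p')) (pbdPmf (Fin.append q q')) < ε := by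
  refine ⟨200, by norm_num, ?_⟩
  intro ε hε hε2 k m p q p' q' hp hq hp' hq' V hVp hVq A hA hmom
  have hP := append_mem_unit hp hp'
  have hQ := append_mem_unit hq hq'
  have hV0 : 0 ≤ V := by
    rw [← hVp]
    exact Finset.sum_nonneg fun i _ => mul_nonneg (hP i).1 (by linarith [(hP i).2])
  rcases hV0.eq_or_lt with rfl | hV
  · rw [append_eq_of_var_zero hp hp' hVp, append_eq_of_var_zero hq hq' hVq]
    simpa [dTV] using hε
  set L := Real.log (1 / ε) with hLdef
  have hεL : ε = Real.exp (-L) := by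
    rw [hLdef, one_div, Real.log_inv, neg_neg, Real.exp_log hε]
  have hL : 0.69 < L := by
    have h1 : Real.log 2 < L := Real.log_lt_log (by norm_num) (by
      rw [lt_div_iff₀ hε]; linarith)
    linarith [Real.log_two_gt_d9]
  set δ := ε / (200 * L) with hδdef
  have hδ0 : 0 < δ := by positivity
  have hδ : δ ≤ 1 / 2 := by
    rw [hδdef, div_le_iff₀ (by positivity)]; nlinarith
  have hpt := pmf_sub_le (p := Fin.append p p') (q := Fin.append q q') hV
    (B := 6 * δ) (by positivity) (fun x hx =>
      pbdChar_sub_le hp hq hp' hq' hV (by linarith) (C := 200) (by norm_num) hVp hVq hA hδ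
        (by rw [hδdef, ← hεL]) hmom hx)
  -- `s` is the exponent of the Chernoff bound and `t` the half-width of the window.
  have key : ∀ s t : ℝ, 0 ≤ s → s ≤ 1 → 0 ≤ t → s ^ 2 * V ≤ L → s * t = 4 * L →
      (2 * t + 1) * (6 * δ * min 1 (1 / Real.sqrt V)) ≤ ε / 2 →
      dTV (pbdPmf (Fin.append p p')) (pbdPmf (Fin.append q q')) < ε := by
    intro s t hs hs1 ht hsV hst hmain
    refine (dTV_le_window hP hQ
      (fun j : ℕ => |(j : ℝ) - ∑ i, Fin.append p p' i| ≤ t)).trans_lt ?_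
    have htail := pbd_tail hP hs hs1 t
    have hwin : ∑ j ∈ (Finset.range (Fintype.card (Fin (k + m)) + 1)).filter
        (fun j : ℕ => |(j : ℝ) - ∑ i, Fin.append p p' i| ≤ t),
        |pbdPmf (Fin.append p p') j - pbdPmf (Fin.append q q') j| ≤ ε / 2 := by
      refine (Finset.sum_le_card_nsmul _ _ _ fun j _ => hpt j).trans (le_trans ?_ hmain)
      rw [nsmul_eq_mul]
      exact mul_le_mul_of_nonneg_right (card_window_le _ _ ht) (by positivity)
    have hexp : 2 * Real.exp (s ^ 2 * pbdVar (Fin.append p p') - s * t) < ε / 2 := by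
      have h1 : Real.exp (s ^ 2 * pbdVar (Fin.append p p') - s * t) ≤ ε ^ 3 := by
        rw [hεL, ← Real.exp_nat_mul, hVp, hst]
        refine Real.exp_le_exp.2 ?_
        push_cast
        linarith
      have h2 : ε ^ 2 < 1 / 4 := by nlinarith
      have h3 : ε ^ 3 = ε * ε ^ 2 := by ring
      nlinarith
    linarith
  have hδL : δ * (200 * L) = ε := by rw [hδdef]; field_simp
  rcases le_or_gt V L with hVL | hVL
  · refine key 1 (4 * L) zero_le_one le_rfl (by linarith) (by linarith) (by ring) ?_
    have h1 : 6 * δ * min 1 (1 / Real.sqrt V) ≤ 6 * δ :=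
      mul_le_of_le_one_right (by positivity) (min_le_left _ _)
    refine (mul_le_mul_of_nonneg_left h1 (by linarith)).trans ?_
    nlinarith
  · set r := Real.sqrt L with hr
    set v := Real.sqrt V with hv
    have hr2 : r ^ 2 = L := Real.sq_sqrt (by linarith)
    have hv2 : v ^ 2 = V := Real.sq_sqrt hV0
    have hr8 : 0.8 < r := Real.lt_sqrt_of_sq_lt (by norm_num; linarith)
    have hrv : r ≤ v := Real.sqrt_le_sqrt hVL.le
    have hr0 : 0 < r := by linarith
    have hv0 : 0 < v := by linarith
    refine key (r / v) (4 * (r * v)) (by positivity) ((div_le_one hv0).2 hrv) (by positivity)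
      (le_of_eq ?_) ?_ ?_
    · rw [← hv2, ← hr2]; field_simp
    · rw [← hr2]; field_simp
    · have h1 : 6 * δ * min 1 (1 / v) ≤ 6 * δ * (1 / v) :=
        mul_le_mul_of_nonneg_left (min_le_right _ _) (by positivity)
      refine (mul_le_mul_of_nonneg_left h1 (by positivity)).trans ?_
      have h2 : (2 * (4 * (r * v)) + 1) * (6 * δ * (1 / v)) = 6 * δ * (8 * (r * v) + 1) / v := by
        ring
      rw [h2, div_le_iff₀ hv0, ← hδL, ← hr2]
      have h3 : 0.8 * (r * v) ≤ r ^ 2 * v := by nlinarith [mul_pos hr0 hv0]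
      have h4 : 0.64 ≤ r * v := by nlinarith
      have h5 : 6 * (8 * (r * v) + 1) ≤ 100 * (r ^ 2 * v) := by linarith
      nlinarith
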